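/- Let E be a real normed vector space, m ≥ 1, f : E → (Fin m → ℝ) a classifier with m logits, ε ≥ 0, and K : Fin m → ℝ with K_i ≥ 0 such that each logit x ↦ f(x)_i is Lipschitz with constant K_i. Suppose x₁, x₂ ∈ E with ‖x₁ − x₂‖ ≤ ε, and suppose class j₁ satisfies the GloRo certification condition at x₁ with radius ε/2 (for every i ≠ j₁, f(x₁)_{j₁} > f(x₁)_i + (K_i + K_{j₁})·(ε/2)) and class j₂ satisfies the GloRo certification condition at x₂ with radius ε/2. Then j₁ = j₂. Consequently the GloRo net built with radius ε/2 is ε-globally-robust: any two inputs at distance at most ε on which it does not abstain receive the same class. (Theorem 2 of the paper.) -/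

import Mathlib

/-!
If the certified classes `j₁` and `j₂` differ, the margin `f · j₁ - f · j₂` is
`(K j₁ + K j₂)`-Lipschitz, exceeds `(K j₁ + K j₂) * r₁` at `x₁` and lies below
`-(K j₁ + K j₂) * r₂` at `x₂`. A drop that large takes a distance greater than `r₁ + r₂`.
-/

open scoped NNReal

/-- The GloRo certification condition with radius `r` for class `j`, as a condition on the vector
`y` of logits at the input; `K i` is the Lipschitz bound of the `i`-th logit. -/
def IsGloRoCertified {ι : Type*} (K : ι → ℝ≥0) (r : ℝ) (y : ι → ℝ) (j : ι) : Prop :=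
  ∀ i, i ≠ j → y i + (K i + K j) * r < y j

section PseudoMetricSpace

variable {X ι : Type*} [PseudoMetricSpace X] {x₁ x₂ : X} {r₁ r₂ : ℝ}

theorem add_lt_dist_of_lipschitzWith {C : ℝ≥0} {g : X → ℝ} (hg : LipschitzWith C g)
    (h₁ : C * r₁ < g x₁) (h₂ : g x₂ < -(C * r₂)) : r₁ + r₂ < dist x₁ x₂ := by
  refine lt_of_mul_lt_mul_left ?_ C.coe_nonneg
  calc C * (r₁ + r₂) < g x₁ - g x₂ := by linarith
    _ ≤ dist (g x₁) (g x₂) := Real.sub_le_dist _ _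
    _ ≤ C * dist x₁ x₂ := hg.dist_le_mul x₁ x₂

variable {f : X → ι → ℝ} {K : ι → ℝ≥0} {j₁ j₂ : ι}

theorem IsGloRoCertified.add_lt_dist_of_ne (hf : ∀ i, LipschitzWith (K i) (f · i))
    (h₁ : IsGloRoCertified K r₁ (f x₁) j₁) (h₂ : IsGloRoCertified K r₂ (f x₂) j₂)
    (hne : j₁ ≠ j₂) : r₁ + r₂ < dist x₁ x₂ := by
  have margin_lipschitz : LipschitzWith (K j₁ + K j₂) (fun x ↦ f x j₁ - f x j₂) :=
    (hf j₁).sub (hf j₂)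
  refine add_lt_dist_of_lipschitzWith margin_lipschitz ?_ ?_
  · rw [NNReal.coe_add]
    linarith [h₁ j₂ hne.symm]
  · rw [NNReal.coe_add]
    linarith [h₂ j₁ hne]

theorem gloro_global_robustness_general (hf : ∀ i, LipschitzWith (K i) (f · i))
    (hx : dist x₁ x₂ ≤ r₁ + r₂) (h₁ : IsGloRoCertified K r₁ (f x₁) j₁)
    (h₂ : IsGloRoCertified K r₂ (f x₂) j₂) : j₁ = j₂ :=
  of_not_not fun hne ↦ (h₁.add_lt_dist_of_ne hf h₂ hne).not_ge hx

end PseudoMetricSpace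

theorem gloro_global_robustness
    {E : Type*} [NormedAddCommGroup E] [NormedSpace ℝ E]
    {m : ℕ} (hm : 1 ≤ m) (f : E → Fin m → ℝ)
    (ε : ℝ) (hε : 0 ≤ ε)
    (K : Fin m → ℝ) (hK : ∀ i, 0 ≤ K i)
    (hLip : ∀ i : Fin m, ∀ x₁ x₂ : E, |f x₁ i - f x₂ i| ≤ K i * ‖x₁ - x₂‖)
    (x₁ x₂ : E) (hx : ‖x₁ - x₂‖ ≤ ε)
    (j₁ j₂ : Fin m)
    (hcert₁ : ∀ i : Fin m, i ≠ j₁ → f x₁ j₁ > f x₁ i + (K i + K j₁) * (ε / 2))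
    (hcert₂ : ∀ i : Fin m, i ≠ j₂ → f x₂ j₂ > f x₂ i + (K i + K j₂) * (ε / 2)) :
    j₁ = j₂ := by
  lift K to Fin m → ℝ≥0 using hK
  have hf (i : Fin m) : LipschitzWith (K i) (f · i) :=
    .of_dist_le_mul fun x y ↦ by simpa only [Real.dist_eq, dist_eq_norm x y] using hLip i x y
  have hdist : dist x₁ x₂ ≤ ε / 2 + ε / 2 := by rwa [dist_eq_norm, add_halves]
  exact gloro_global_robustness_general hf hdist hcert₁ hcert₂
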